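/- Let (L_1 ⊂ ⋯ ⊂ L_{k−1}) be a partial flag of subspaces of V_k with dim L_i = i and z(L_i) ⊆ L_{i−1} for 1 ≤ i ≤ k−1 (convention L_0 = 0). Then: (a) L_{k−1} is contained in the image of z, i.e. in the span of e_1, …, e_{k−1}, f_1, …, f_{k−1}; (b) dim z^{−1}(L_{k−1}) = k+1, so the quotient z^{−1}(L_{k−1})/L_{k−1} is 2-dimensional; (c) the map L_k ↦ L_k/L_{k−1} is a bijection from the set {L_k : L_{k−1} ⊂ L_k, dim L_k = k, z(L_k) ⊆ L_{k−1}} onto the set of 1-dimensional subspaces of the 2-dimensional space z^{−1}(L_{k−1})/L_{k−1}. Consequently the fibers of the forgetful map Y_k → Y_{k−1}, (L_1, …, L_k) ↦ (L_1, …, L_{k−1}), are in bijection with the projective line over the base field. -/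

import Mathlib

open scoped BigOperators

/-- The coordinate shift: `(shiftMap v) i = v (i+1)`, with the last coordinate sent to `0`. -/
def shiftMap (K : Type*) [Field K] (N : ℕ) : (Fin N → K) →ₗ[K] (Fin N → K) where
  toFun v i := if h : (i : ℕ) + 1 < N then v ⟨(i : ℕ) + 1, h⟩ else 0
  map_add' u v := by funext i; split <;> rename_i h <;> simp [h]
  map_smul' c v := by funext i; split <;> rename_i h <;> simp [h]

/-- The `2k`-dimensional space `V_k`: the first factor holds the coordinates in the basis
`e₁, …, e_k`, the second factor those in `f₁, …, f_k` (0-indexed). -/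
abbrev VV (K : Type*) [Field K] (k : ℕ) := (Fin k → K) × (Fin k → K)

/-- The nilpotent `z : V_k → V_k`, `z eᵢ = eᵢ₋₁`, `z fᵢ = fᵢ₋₁` (with `e₀ = f₀ = 0`). -/
def zmap (K : Type*) [Field K] (k : ℕ) : VV K k →ₗ[K] VV K k :=
  (shiftMap K k).prodMap (shiftMap K k)

theorem finrank_map_add_ker {K V W : Type*} [Field K] [AddCommGroup V] [Module K V]
    [AddCommGroup W] [Module K W] [FiniteDimensional K V] (f : V →ₗ[K] W) (N : Submodule K V)
    (h : LinearMap.ker f ≤ N) :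
    Module.finrank K (Submodule.map f N) + Module.finrank K (LinearMap.ker f)
      = Module.finrank K N := by
  have h1 := LinearMap.finrank_range_add_finrank_ker (f.domRestrict N)
  rw [LinearMap.range_domRestrict, LinearMap.ker_domRestrict] at h1
  rw [← h1]
  congr 1
  exact (Submodule.comapSubtypeEquivOfLe h).finrank_eq.symm

theorem shiftMap_apply {K : Type*} [Field K] (N : ℕ) (v : Fin N → K) (i : Fin N) :
    shiftMap K N v i = if h : (i : ℕ) + 1 < N then v ⟨(i : ℕ) + 1, h⟩ else 0 := rfl

theorem zmap_apply {K : Type*} [Field K] (N : ℕ) (v : VV K N) :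
    zmap K N v = (shiftMap K N v.1, shiftMap K N v.2) := rfl

theorem shift_surj {K : Type*} [Field K] (N : ℕ) (v : Fin N → K)
    (h : ∀ j : Fin N, N - 1 ≤ (j : ℕ) → v j = 0) : ∃ w, shiftMap K N w = v := by
  refine ⟨fun i => v ⟨(i : ℕ) - 1, by omega⟩, ?_⟩
  funext i
  rw [shiftMap_apply]
  split_ifs with hi
  · simp
  · exact (h i (by omega)).symm

theorem shift_ker {K : Type*} [Field K] (N : ℕ) (hN : 1 ≤ N) (v : Fin N → K) :
    shiftMap K N v = 0 ↔ ∃ a, Pi.single (⟨0, hN⟩ : Fin N) a = v := by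
  constructor
  · intro h
    refine ⟨v ⟨0, hN⟩, ?_⟩
    funext i
    rcases i with ⟨i, hi⟩
    rcases i with _ | i
    · simp
    · have := congrFun h ⟨i, by omega⟩
      rw [shiftMap_apply] at this
      simp [hi] at this
      simp [Pi.single_apply, this]
  · rintro ⟨a, rfl⟩
    funext i
    rw [shiftMap_apply]
    split_ifs with hi
    · simp [Pi.single_apply]
    · rfl

theorem finrank_ker_zmap {K : Type*} [Field K] (k : ℕ) (hk : 1 ≤ k) :
    Module.finrank K (LinearMap.ker (zmap K k)) = 2 := by
  have h : LinearMap.ker (zmap K k) = LinearMap.range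
      ((LinearMap.single K (fun _ : Fin k => K) ⟨0, hk⟩).prodMap
        (LinearMap.single K (fun _ : Fin k => K) ⟨0, hk⟩)) := by
    ext ⟨u, v⟩
    rw [LinearMap.mem_ker, zmap_apply, LinearMap.mem_range, Prod.mk_eq_zero]
    simp only [shift_ker k hk]
    constructor
    · rintro ⟨⟨a, ha⟩, ⟨b, hb⟩⟩
      exact ⟨(a, b), by simp [ha, hb]⟩
    · rintro ⟨⟨a, b⟩, h⟩
      simp at h
      exact ⟨⟨a, h.1⟩, ⟨b, h.2⟩⟩
  rw [h, LinearMap.finrank_range_of_inj]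
  · simp
  · rintro ⟨a, b⟩ ⟨c, d⟩ h
    simpa using h

theorem lines_equiv {K V : Type*} [Field K] [AddCommGroup V] [Module K V]
    (W : Submodule K V) (hW : Module.finrank K W = 2) :
    Nonempty ({S : Submodule K V // Module.finrank K S = 1 ∧ S ≤ W}
      ≃ Projectivization K (Fin 2 → K)) := by
  haveI : FiniteDimensional K W := FiniteDimensional.of_finrank_pos (by omega)
  let e : W ≃ₗ[K] (Fin 2 → K) := LinearEquiv.ofFinrankEq _ _ (by simp [hW])
  let e1 : {H : Submodule K W // Module.finrank K H = 1} ≃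
      {H : Submodule K (Fin 2 → K) // Module.finrank K H = 1} :=
    (Submodule.orderIsoMapComap e).toEquiv.subtypeEquiv (fun H => by
      have := LinearEquiv.finrank_map_eq e H
      change _ ↔ Module.finrank K (H.map (e : W →ₗ[K] (Fin 2 → K))) = 1
      rw [this])
  let e2 : {H : Submodule K W // Module.finrank K H = 1} ≃
      {S : Set.Iic W // Module.finrank K S.1 = 1} :=
    (Submodule.mapIic W).toEquiv.subtypeEquiv (fun H => by
      have := Submodule.finrank_map_subtype_eq W H
      change _ ↔ Module.finrank K (H.map W.subtype) = 1
      rw [this])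
  let e3 : {S : Set.Iic W // Module.finrank K S.1 = 1} ≃
      {S : Submodule K V // Module.finrank K S = 1 ∧ S ≤ W} :=
    { toFun := fun S => ⟨S.1.1, S.2, S.1.2⟩
      invFun := fun S => ⟨⟨S.1, S.2.2⟩, S.2.1⟩
      left_inv := fun _ => rfl
      right_inv := fun _ => rfl }
  exact ⟨e3.symm.trans (e2.symm.trans (e1.trans (Projectivization.equivSubmodule K _).symm))⟩

/-- **The forgetful map `Y_k → Y_{k-1}` is a `ℙ¹`-bundle (fibrewise statement).**
Given a partial flag `L₀ = 0 ⊂ L₁ ⊂ ⋯ ⊂ L_{k-1}` (here `Lf i = Lᵢ`, `dim Lᵢ = i`,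
`z(Lᵢ) ⊆ L_{i-1}`, and `Ltop = L_{k-1}`): (a) `L_{k-1}` is contained in the image of `z`
(the span of `e₁, …, e_{k-1}, f₁, …, f_{k-1}`); (b) `dim z⁻¹(L_{k-1}) = k+1`, so
`z⁻¹(L_{k-1})/L_{k-1}` is 2-dimensional; (c) `L_k ↦ L_k/L_{k-1}` is a bijection from the
set of admissible one-step extensions of the flag onto the set of lines in the image of
`z⁻¹(L_{k-1})` in `V_k/L_{k-1}`; consequently the fibre of the forgetful map
`Y_k → Y_{k-1}` over the given flag is in bijection with the projective line over `K`. -/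
theorem fibre_of_forgetful_map {K : Type*} [Field K] (k : ℕ) (hk : 1 ≤ k)
    (Lf : Fin k → Submodule K (VV K k))
    (hbot : Lf ⟨0, by omega⟩ = ⊥)
    (hdim : ∀ i : Fin k, Module.finrank K (Lf i) = (i : ℕ))
    (hmono : ∀ i j : Fin k, i ≤ j → Lf i ≤ Lf j)
    (hz : ∀ i : Fin k, 1 ≤ (i : ℕ) → ∀ v ∈ Lf i,
      zmap K k v ∈ Lf ⟨(i : ℕ) - 1, by have := i.isLt; omega⟩)
    (Ltop : Submodule K (VV K k)) (hLtop : Ltop = Lf ⟨k - 1, by omega⟩) :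
    Ltop ≤ LinearMap.range (zmap K k) ∧
    Module.finrank K (Submodule.comap (zmap K k) Ltop) = k + 1 ∧
    Set.BijOn
      (fun Lk : Submodule K (VV K k) => Submodule.map Ltop.mkQ Lk)
      {Lk : Submodule K (VV K k) | Ltop < Lk ∧
        Module.finrank K Lk = k ∧ ∀ v ∈ Lk, zmap K k v ∈ Ltop}
      {S : Submodule K (VV K k ⧸ Ltop) | Module.finrank K S = 1 ∧
        S ≤ Submodule.map Ltop.mkQ (Submodule.comap (zmap K k) Ltop)} ∧
    Nonempty
      ({Lk : Submodule K (VV K k) // Ltop < Lk ∧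
          Module.finrank K Lk = k ∧ ∀ v ∈ Lk, zmap K k v ∈ Ltop}
        ≃ Projectivization K (Fin 2 → K)) := by
  have hcoord : ∀ n (hn : n < k), ∀ v ∈ Lf ⟨n, hn⟩, ∀ j : Fin k, n ≤ (j : ℕ) →
      v.1 j = 0 ∧ v.2 j = 0 := by
    intro n
    induction n with
    | zero =>
      intro hn v hv j _
      rw [hbot, Submodule.mem_bot] at hv
      simp [hv]
    | succ n ih =>
      intro hn v hv j hj
      have h1 := ih (by omega) _ (hz ⟨n + 1, hn⟩ (by simp) v hv) ⟨(j : ℕ) - 1, by omega⟩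
        (by simp; omega)
      have h2 : (j : ℕ) - 1 + 1 = j := by omega
      simpa [zmap_apply, shiftMap_apply, h2] using h1
  have ha : Ltop ≤ LinearMap.range (zmap K k) := by
    intro v hv
    rw [hLtop] at hv
    obtain ⟨a, ha⟩ := shift_surj k v.1 (fun j hj => (hcoord _ _ v hv j hj).1)
    obtain ⟨b, hb⟩ := shift_surj k v.2 (fun j hj => (hcoord _ _ v hv j hj).2)
    exact ⟨(a, b), by rw [zmap_apply]; simp [ha, hb]⟩
  have hfin : Module.finrank K Ltop = k - 1 := by rw [hLtop, hdim]
  have hb : Module.finrank K (Submodule.comap (zmap K k) Ltop) = k + 1 := by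
    have h1 := finrank_map_add_ker (zmap K k) (Submodule.comap (zmap K k) Ltop)
      (LinearMap.ker_le_comap _)
    rw [Submodule.map_comap_eq_self ha, finrank_ker_zmap k hk, hfin] at h1
    omega
  have hle : Ltop ≤ Submodule.comap (zmap K k) Ltop := by
    intro v hv
    rw [Submodule.mem_comap]
    subst hLtop
    rcases Nat.lt_or_ge 1 k with h | h
    · exact hmono _ _ (by simp [Fin.le_def]) (hz ⟨k - 1, by omega⟩ (by simp; omega) v hv)
    · obtain rfl : k = 1 := by omega
      have hv0 : v = 0 := by
        have : v ∈ (⊥ : Submodule K (VV K 1)) := hbot ▸ hv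
        simpa using this
      rw [hv0, map_zero]
      exact Submodule.zero_mem _
  have hq : ∀ N : Submodule K (VV K k), Ltop ≤ N →
      Module.finrank K (Submodule.map Ltop.mkQ N) + (k - 1) = Module.finrank K N := by
    intro N hN
    have := finrank_map_add_ker Ltop.mkQ N (by rwa [Submodule.ker_mkQ])
    rwa [Submodule.ker_mkQ, hfin] at this
  have hbij : Set.BijOn
      (fun Lk : Submodule K (VV K k) => Submodule.map Ltop.mkQ Lk)
      {Lk : Submodule K (VV K k) | Ltop < Lk ∧
        Module.finrank K Lk = k ∧ ∀ v ∈ Lk, zmap K k v ∈ Ltop}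
      {S : Submodule K (VV K k ⧸ Ltop) | Module.finrank K S = 1 ∧
        S ≤ Submodule.map Ltop.mkQ (Submodule.comap (zmap K k) Ltop)} := by
    refine ⟨?_, ?_, ?_⟩
    · rintro N ⟨h1, h2, h3⟩
      have := hq N h1.le
      exact ⟨by dsimp only; omega, Submodule.map_mono h3⟩
    · rintro N ⟨h1, -, -⟩ N' ⟨h1', -, -⟩ h
      have h := congrArg (Submodule.comap Ltop.mkQ) h
      simpa only [Submodule.comap_map_mkQ, sup_eq_right.2 h1.le, sup_eq_right.2 h1'.le] using h
    · rintro S ⟨h1, h2⟩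
      have hS : Submodule.map Ltop.mkQ (Submodule.comap Ltop.mkQ S) = S :=
        Submodule.map_comap_eq_of_surjective (Submodule.mkQ_surjective _) S
      have hL : Ltop ≤ Submodule.comap Ltop.mkQ S := Submodule.le_comap_mkQ _ _
      have h4 := hq _ hL
      rw [hS, h1] at h4
      refine ⟨Submodule.comap Ltop.mkQ S, ⟨lt_of_le_of_ne hL ?_, by omega, ?_⟩, hS⟩
      · intro h
        rw [← h] at h4
        omega
      · have h5 := Submodule.comap_mono (f := Ltop.mkQ) h2
        rw [Submodule.comap_map_mkQ, sup_eq_right.2 hle] at h5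
        exact h5
  refine ⟨ha, hb, hbij, ?_⟩
  obtain ⟨e⟩ := lines_equiv (Submodule.map Ltop.mkQ (Submodule.comap (zmap K k) Ltop))
    (by have := hq _ hle; omega)
  exact ⟨(hbij.equiv _).trans e⟩
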